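/- Let φ : D → D be an irrational pseudo-rotation, and let T := Dφ(0) be its linearization at the origin (an invertible orientation-preserving linear map of ℝ²). Let f_T : S¹ → S¹ be the induced circle homeomorphism f_T(v) := Tv/|Tv|. Then the rotation number of f_T, as an element of ℝ/ℤ, equals the rotation number of the boundary restriction φ|_{∂D}. -/

import Mathlib

open Complex Metric Set Filter

/-- The closed unit disk in `ℂ ≅ ℝ²`. -/
def Disk : Set ℂ := Metric.closedBall 0 1

/-- A `C^∞`-smooth diffeomorphism of the closed unit disk: a bijection of `Disk`
which is `C^∞` up to the boundary together with its inverse. -/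
structure SmoothDiskDiffeo where
  toFun : ℂ → ℂ
  invFun : ℂ → ℂ
  mapsTo : Set.MapsTo toFun Disk Disk
  mapsTo_inv : Set.MapsTo invFun Disk Disk
  left_inv : ∀ z ∈ Disk, invFun (toFun z) = z
  right_inv : ∀ z ∈ Disk, toFun (invFun z) = z
  smooth : ContDiffOn ℝ (⊤ : ℕ∞) toFun Disk
  smooth_inv : ContDiffOn ℝ (⊤ : ℕ∞) invFun Disk

/-- The point `e^{2πix}` on the unit circle. -/
noncomputable def eCirc (x : ℝ) : ℂ := Complex.exp ((2 * Real.pi * x) * Complex.I)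




theorem exists_cont_log (f : ℂ → ℂ) (hf : Continuous f) (h0 : ∀ z, f z ≠ 0) :
    ∃ L : ℂ → ℂ, Continuous L ∧ ∀ z, Complex.exp (L z) = f z := by
  obtain ⟨F, ⟨-, h⟩, -⟩ := Complex.isCoveringMap_exp.existsUnique_continuousMap_lifts
    (⟨fun z => ⟨f z, h0 z⟩, by fun_prop⟩ : C(ℂ, {z : ℂ // z ≠ 0})) 0 (Complex.log (f 0))
    (by ext; simp [Complex.exp_log (h0 0)])
  refine ⟨F, F.continuous, fun z => ?_⟩
  have := congrFun h z
  simpa using congrArg Subtype.val this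

theorem int_const {X : Type*} [TopologicalSpace X] [PreconnectedSpace X] (g : X → ℝ)
    (hg : Continuous g) (hn : ∀ x, ∃ n : ℤ, g x = n) (x y : X) : g x = g y := by
  choose n hn using hn
  have : Continuous n := by
    rw [Int.isClosedEmbedding_coe_real.isInducing.continuous_iff]
    exact hg.congr hn
  rw [hn, hn, PreconnectedSpace.constant ‹_› this]

theorem sin_pos_close (g : ℝ → ℝ) (a b : ℝ) (hab : a ≤ b) (hg : ContinuousOn g (Icc a b))
    (hs : ∀ x ∈ Icc a b, 0 < Real.sin (g x)) : |g a - g b| < Real.pi := by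
  have hpi := Real.pi_pos
  have key : ∀ u, (∃ x ∈ Icc a b, g x = u) → (∃ x ∈ Icc a b, g x = u + Real.pi) → False := by
    rintro u ⟨x, hx, rfl⟩ ⟨y, hy, hxy⟩
    have hpre : IsPreconnected (g '' Icc a b) := isPreconnected_Icc.image g hg
    have : (⌈g x / Real.pi⌉ : ℝ) * Real.pi ∈ g '' Icc a b := by
      refine hpre.Icc_subset ⟨x, hx, rfl⟩ ⟨y, hy, hxy⟩ ⟨?_, ?_⟩
      · rw [← div_le_iff₀ hpi]; exact Int.le_ceil _
      · have := (Int.ceil_lt_add_one (g x / Real.pi)).le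
        calc _ ≤ (g x / Real.pi + 1) * Real.pi := by gcongr
          _ = _ := by field_simp
    obtain ⟨w, hw, hw'⟩ := this
    have := hs w hw
    rw [hw', Real.sin_int_mul_pi] at this
    exact lt_irrefl _ this
  have hpre : IsPreconnected (g '' Icc a b) := isPreconnected_Icc.image g hg
  have ha : g a ∈ g '' Icc a b := ⟨a, ⟨le_rfl, hab⟩, rfl⟩
  have hb : g b ∈ g '' Icc a b := ⟨b, ⟨hab, le_rfl⟩, rfl⟩
  rw [abs_lt]
  constructor
  · by_contra! h
    exact key (g a) ha (hpre.Icc_subset ha hb ⟨by linarith, by linarith⟩)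
  · by_contra! h
    exact key (g b) hb (hpre.Icc_subset hb ha ⟨by linarith, by linarith⟩)

/-- Lifts of (twist-free) area-preserving annulus maps, extended to the plane. -/
structure PBMap (K : ℂ → ℂ) : Prop where
  cont : Continuous K
  inj : Function.Injective K
  per : ∀ z, K (z + 1) = K z + 1
  bot : ∀ z : ℂ, z.im ≤ 0 → (K z).im = z.im
  top : ∀ z : ℂ, 1 ≤ z.im → (K z).im = z.im
  mid : ∀ z : ℂ, 0 < z.im → z.im < 1 → 0 < (K z).im ∧ (K z).im < 1
  meas : ∀ X : Set ℂ, MeasurableSet X → (∀ z ∈ X, 0 < z.im ∧ z.im < 1) →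
    MeasureTheory.volume (K '' X) = MeasureTheory.volume X

namespace PBMap
variable {K : ℂ → ℂ}

theorem per_int (h : PBMap K) (z : ℂ) (n : ℤ) : K (z + n) = K z + n := by
  induction n using Int.induction_on with
  | zero => simp
  | succ n ih => push_cast at ih ⊢; rw [← add_assoc, h.per, ih, add_assoc]
  | pred n ih =>
    have := h.per (z + ((-(n:ℤ) - 1 : ℤ) : ℂ))
    push_cast at this ih ⊢
    rw [show z + (-(n:ℂ) - 1) + 1 = z + -n by ring, ih] at this
    rw [eq_comm, ← sub_eq_iff_eq_add] at this
    rw [← this]; ring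

theorem exists_shift (h : PBMap K) (z : ℂ) : ∃ w : ℂ, w ∈ Icc (0:ℝ) 1 ×ℂ Icc z.im z.im ∧
    K z - z = K w - w := by
  refine ⟨z + ((-⌊z.re⌋ : ℤ) : ℂ), ?_, ?_⟩
  · rw [Complex.mem_reProdIm]
    simp only [add_re, intCast_re, add_im, intCast_im, add_zero, mem_Icc, le_refl, and_self,
      and_true]
    push_cast
    have := Int.floor_le z.re
    have := Int.lt_floor_add_one z.re
    constructor <;> linarith
  · rw [h.per_int]; ring

theorem compact_strip : IsCompact (Icc (0:ℝ) 1 ×ℂ Icc (0:ℝ) 1) :=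
  isCompact_Icc.reProdIm isCompact_Icc

theorem exists_lower (h : PBMap K) (hfix : ∀ z, K z ≠ z) :
    ∃ δ > 0, ∀ z : ℂ, 0 ≤ z.im → z.im ≤ 1 → δ ≤ ‖K z - z‖ := by
  have hc : ContinuousOn (fun z => ‖K z - z‖) (Icc (0:ℝ) 1 ×ℂ Icc (0:ℝ) 1) := by
    have := h.cont; fun_prop
  obtain ⟨w, hw, hmin⟩ := compact_strip.exists_isMinOn
    ⟨0, by simp [Complex.mem_reProdIm]⟩ hc
  refine ⟨‖K w - w‖, by simpa [sub_eq_zero] using hfix w, fun z h0 h1 => ?_⟩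
  obtain ⟨v, hv, e⟩ := h.exists_shift z
  rw [e]
  apply hmin
  rw [Complex.mem_reProdIm] at hv ⊢
  exact ⟨hv.1, by have := hv.2.1; have := hv.2.2; constructor <;> linarith⟩

theorem exists_upper (h : PBMap K) :
    ∃ C, ∀ z : ℂ, 0 ≤ z.im → z.im ≤ 1 → ‖K z - z‖ ≤ C := by
  have hc : ContinuousOn (fun z => ‖K z - z‖) (Icc (0:ℝ) 1 ×ℂ Icc (0:ℝ) 1) := by
    have := h.cont; fun_prop
  obtain ⟨w, hw, hmin⟩ := compact_strip.exists_isMaxOn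
    ⟨0, by simp [Complex.mem_reProdIm]⟩ hc
  refine ⟨‖K w - w‖, fun z h0 h1 => ?_⟩
  obtain ⟨v, hv, e⟩ := h.exists_shift z
  rw [e]
  apply hmin
  rw [Complex.mem_reProdIm] at hv ⊢
  exact ⟨hv.1, by have := hv.2.1; have := hv.2.2; constructor <;> linarith⟩

theorem im_nonneg (h : PBMap K) {z : ℂ} (hz : 0 ≤ z.im) : 0 ≤ (K z).im := by
  rcases hz.eq_or_lt with e | e
  · rw [h.bot z e.symm.le]; exact hz
  rcases le_or_gt 1 z.im with e' | e'
  · rw [h.top z e']; exact hz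
  · exact (h.mid z e e').1.le

theorem im_pos (h : PBMap K) {z : ℂ} (hz : 0 < z.im) : 0 < (K z).im := by
  rcases le_or_gt 1 z.im with e' | e'
  · rw [h.top z e']; exact hz
  · exact (h.mid z hz e').1

/-- The pushed map. -/
noncomputable def push (K : ℂ → ℂ) (ε : ℝ) (z : ℂ) : ℂ := K z + ε * I

theorem push_im (K : ℂ → ℂ) (ε : ℝ) (z : ℂ) : (push K ε z).im = (K z).im + ε := by
  simp [push]

theorem push_inj (h : PBMap K) (ε : ℝ) : Function.Injective (push K ε) := by
  intro a b hab
  exact h.inj (add_right_cancel hab)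

theorem push_cont (h : PBMap K) (ε : ℝ) : Continuous (push K ε) := by
  have := h.cont
  unfold push; fun_prop

theorem push_iter_im (h : PBMap K) {ε : ℝ} (hε : 0 < ε) (n : ℕ) {z : ℂ} (hz : 0 ≤ z.im) :
    0 ≤ ((push K ε)^[n] z).im ∧ (1 ≤ n → ε ≤ ((push K ε)^[n] z).im) := by
  induction n with
  | zero => simpa using hz
  | succ n ih =>
    rw [Function.iterate_succ_apply', push_im]
    have := h.im_nonneg ih.1
    exact ⟨by linarith, fun _ => by linarith⟩

theorem push_iter_disj (h : PBMap K) {ε : ℝ} (hε : 0 < ε) {m n : ℕ} {z w : ℂ}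
    (hz : 0 ≤ z.im) (hz' : z.im < ε) (hw : 0 ≤ w.im) (hw' : w.im < ε)
    (e : (push K ε)^[m] z = (push K ε)^[n] w) : m = n ∧ z = w := by
  wlog hmn : m ≤ n generalizing m n z w
  · have := this hw hw' hz hz' e.symm (by omega)
    exact ⟨this.1.symm, this.2.symm⟩
  obtain ⟨j, rfl⟩ := Nat.exists_eq_add_of_le hmn
  rw [Function.iterate_add_apply] at e
  have e' := (h.push_inj ε).iterate m e
  rcases Nat.eq_zero_or_pos j with rfl | hj
  · exact ⟨rfl, e'⟩
  · have := (h.push_iter_im hε j hw).2 hj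
    rw [← e'] at this
    linarith

theorem vol_rect (a b c d : ℝ) : MeasureTheory.volume (Ioo a b ×ℂ Ioo c d) =
    ENNReal.ofReal (b - a) * ENNReal.ofReal (d - c) := by
  have := Complex.volume_preserving_equiv_real_prod.measure_preimage
    (s := Ioo a b ×ˢ Ioo c d) (measurableSet_Ioo.prod measurableSet_Ioo).nullMeasurableSet
  rw [MeasureTheory.Measure.volume_eq_prod, MeasureTheory.Measure.prod_prod, Real.volume_Ioo,
    Real.volume_Ioo] at this
  rw [← this]; rfl

theorem escape (h : PBMap K) {ε : ℝ} (hε : 0 < ε) :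
    ∃ w : ℂ, 0 < w.im ∧ w.im < ε ∧ ∃ n : ℕ, 1 < ((push K ε)^[n] w).im := by
  by_contra! hcon
  obtain ⟨C, hC⟩ := h.exists_upper
  have hC0 : 0 ≤ C := (norm_nonneg _).trans (hC 0 (by simp) (by simp))
  have hstrip : ∀ w : ℂ, 0 < w.im → w.im < ε → ∀ n : ℕ,
      0 < ((push K ε)^[n] w).im ∧ ((push K ε)^[n] w).im < 1 := by
    intro w h0 h1 n
    constructor
    · rcases Nat.eq_zero_or_pos n with rfl | hn
      · simpa using h0
      · exact hε.trans_le ((h.push_iter_im hε n h0.le).2 hn)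
    · by_contra! hge
      have := hcon w h0 h1 (n + 1)
      rw [Function.iterate_succ_apply', push_im, h.top _ hge] at this
      linarith
  obtain ⟨N, hN⟩ := exists_nat_gt (2 / ε)
  have hN0 : (0:ℝ) < N := lt_trans (by positivity) hN
  set M : ℝ := 2 * C * N + 2 with hM
  have hMpos : 0 < M := by positivity
  set R : Set ℂ := Ioo 0 M ×ℂ Ioo 0 ε with hR
  have hRmem : ∀ z ∈ R, (0 < z.re ∧ z.re < M) ∧ 0 < z.im ∧ z.im < ε := by
    intro z hz; simpa [hR, Complex.mem_reProdIm] using hz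
  have hRmeas : MeasurableSet R :=
    (isOpen_Ioo.reProdIm isOpen_Ioo).measurableSet
  have hEmeas : ∀ n, MeasurableSet ((push K ε)^[n] '' R) := fun n =>
    hRmeas.image_of_continuousOn_injOn ((h.push_cont ε).iterate n).continuousOn
      ((h.push_inj ε).iterate n).injOn
  have hvol : ∀ n, MeasureTheory.volume ((push K ε)^[n] '' R) = MeasureTheory.volume R := by
    intro n
    induction n with
    | zero => simp
    | succ n ih =>
      rw [← ih, Function.iterate_succ', image_comp]
      have : push K ε '' ((push K ε)^[n] '' R) =
          (fun z => z + (ε * I : ℂ)) '' (K '' ((push K ε)^[n] '' R)) := by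
        simp only [image_image, push]
      rw [this, image_add_right, MeasureTheory.measure_preimage_add_right, h.meas _ (hEmeas n)]
      rintro _ ⟨z, hz, rfl⟩
      exact hstrip z (hRmem z hz).2.1 (hRmem z hz).2.2 n
  have hre : ∀ z ∈ R, ∀ n : ℕ, |((push K ε)^[n] z).re - z.re| ≤ C * n := by
    intro z hz n
    induction n with
    | zero => simp
    | succ n ih =>
      rw [Function.iterate_succ_apply']
      set v := (push K ε)^[n] z
      have hv := hstrip z (hRmem z hz).2.1 (hRmem z hz).2.2 n
      have h1 := (Complex.abs_re_le_norm _).trans (hC v hv.1.le hv.2.le)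
      have h2 : (push K ε v).re = (K v).re := by simp [push]
      rw [h2]
      rw [sub_re] at h1
      push_cast
      calc |(K v).re - z.re| = |((K v).re - v.re) + (v.re - z.re)| := by ring_nf
        _ ≤ _ := abs_add_le _ _
        _ ≤ C + C * n := add_le_add h1 ih
        _ = _ := by ring
  have hsub : (⋃ n ∈ Finset.range N, (push K ε)^[n] '' R) ⊆
      Ioo (-(C * N)- 1) (M + C * N + 1) ×ℂ Ioo 0 1 := by
    intro z hz
    simp only [Finset.mem_range, mem_iUnion, mem_image, exists_prop] at hz
    obtain ⟨n, hn, w, hw, rfl⟩ := hz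
    have h1 := abs_le.1 (hre w hw n)
    have h2 := hRmem w hw
    have h3 := hstrip w h2.2.1 h2.2.2 n
    have h4 : C * n ≤ C * N := by gcongr
    rw [Complex.mem_reProdIm]
    exact ⟨⟨by linarith [h1.1, h2.1.1], by linarith [h1.2, h2.1.2]⟩, h3⟩
  have hle := MeasureTheory.measure_mono (μ := MeasureTheory.volume) hsub
  rw [MeasureTheory.measure_biUnion_finset, Finset.sum_congr rfl (fun n _ => hvol n), hR,
    vol_rect, vol_rect] at hle
  · simp only [Finset.sum_const, Finset.card_range, nsmul_eq_mul] at hle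
    rw [← ENNReal.ofReal_natCast, ← ENNReal.ofReal_mul (by linarith),
      ← ENNReal.ofReal_mul (by positivity), ← ENNReal.ofReal_mul (by nlinarith),
      ENNReal.ofReal_le_ofReal_iff (by nlinarith)] at hle
    rw [div_lt_iff₀ hε] at hN
    have : 2 * M < N * ((M - 0) * (ε - 0)) := by nlinarith
    nlinarith
  · intro m _ n _ hmn
    rw [Function.onFun, Set.disjoint_left]
    rintro _ ⟨z, hz, rfl⟩ ⟨w, hw, e⟩
    have hz := hRmem z hz
    have hw := hRmem w hw
    exact hmn (h.push_iter_disj hε hz.2.1.le hz.2.2 hw.2.1.le hw.2.2 e.symm).1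
  · exact fun n _ => hEmeas n


theorem exists_curve (h : PBMap K) {ε : ℝ} (hε : 0 < ε) :
    ∃ γ : ℝ → ℂ, (∀ n : ℕ, ContinuousOn γ (Icc 0 n)) ∧
      (∀ t, 0 ≤ t → γ (t + 1) = push K ε (γ t)) ∧
      (∀ t, 1 ≤ t → ε ≤ (γ t).im) ∧ (γ 0).im = 0 ∧
      (∀ s t, 0 ≤ s → s < t → γ s ≠ γ t) ∧ ∃ t, 0 ≤ t ∧ 1 < (γ t).im := by
  obtain ⟨w, hw0, hw1, N, hN⟩ := h.escape hε
  set s₁ : ℝ := w.im / ε with hs₁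
  have hs0 : 0 < s₁ := by positivity
  have hs1 : s₁ < 1 := by rwa [hs₁, div_lt_one hε]
  set g : ℝ → ℂ := fun t => ((w.re + ((K w.re).re - w.re) * max 0 ((t - s₁) / (1 - s₁)) : ℝ) : ℂ)
    + ((ε * t : ℝ) : ℂ) * I with hg
  have hgc : Continuous g := by fun_prop
  have hgim : ∀ t, (g t).im = ε * t := by intro t; simp [hg]
  have hg0 : g 0 = w.re := by
    simp only [hg]
    rw [max_eq_left]
    · simp
    · apply div_nonpos_of_nonpos_of_nonneg <;> linarith
  have hgs : g s₁ = w := by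
    have : ε * s₁ = w.im := by rw [hs₁]; field_simp
    simp only [hg, this, sub_self, zero_div, max_self, mul_zero, add_zero]
    exact Complex.re_add_im w
  have hg1 : g 1 = push K ε (g 0) := by
    rw [hg0]
    have h1 : (K w.re).im = 0 := by rw [h.bot _ (by simp)]; simp
    apply Complex.ext
    · simp only [hg]
      rw [div_self (by linarith), max_eq_right (by norm_num)]
      simp [push]
    · rw [hgim, push_im, h1]; ring
  set γ : ℝ → ℂ := fun t => (push K ε)^[⌊t⌋₊] (g (t - ⌊t⌋₊)) with hγ
  have hγn : ∀ n : ℕ, ∀ t ∈ Icc (n:ℝ) (n + 1), γ t = (push K ε)^[n] (g (t - n)) := by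
    intro n t ht
    rcases ht.2.eq_or_lt with e | e
    · have hf : ⌊t⌋₊ = n + 1 := by rw [e]; exact_mod_cast Nat.floor_natCast (n + 1)
      simp only [hγ, hf]
      rw [Function.iterate_succ_apply, e]
      push_cast
      rw [sub_self, ← hg1]; congr 2; ring
    · have hf : ⌊t⌋₊ = n := by
        rw [Nat.floor_eq_iff (le_trans (by positivity) ht.1)]; exact ⟨ht.1, e⟩
      simp only [hγ, hf]
  have hfl : ∀ t : ℝ, 0 ≤ t → (⌊t⌋₊ : ℝ) ≤ t ∧ t < ⌊t⌋₊ + 1 := fun t ht =>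
    ⟨Nat.floor_le ht, Nat.lt_floor_add_one t⟩
  have hgm : ∀ t : ℝ, 0 ≤ t → 0 ≤ (g (t - ⌊t⌋₊)).im ∧ (g (t - ⌊t⌋₊)).im < ε := by
    intro t ht
    have := hfl t ht
    rw [hgim]
    constructor <;> nlinarith
  refine ⟨γ, ?_, ?_, ?_, ?_, ?_, ?_⟩
  · intro n
    induction n with
    | zero => simp
    | succ n ih =>
      have : Icc (0:ℝ) ((n + 1 : ℕ) : ℝ) = Icc 0 (n:ℝ) ∪ Icc (n:ℝ) (n + 1) := by
        push_cast
        rw [Icc_union_Icc_eq_Icc] <;> first | positivity | linarith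
      rw [this]
      refine ih.union_of_isClosed ?_ isClosed_Icc isClosed_Icc
      refine ContinuousOn.congr ?_ (hγn n)
      have := (h.push_cont ε).iterate n
      exact (this.comp (hgc.comp (continuous_id.sub continuous_const))).continuousOn
  · intro t ht
    simp only [hγ]
    rw [Nat.floor_add_one ht, Function.iterate_succ_apply']
    push_cast
    congr 3; ring
  · intro t ht
    have h1 : 1 ≤ ⌊t⌋₊ := by rwa [Nat.one_le_floor_iff]
    exact (h.push_iter_im hε _ (hgm t (by linarith)).1).2 h1
  · simp [hγ, hgim]
  · intro s t hs hst e
    have ht : 0 ≤ t := by linarith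
    obtain ⟨e1, e2⟩ := h.push_iter_disj hε (hgm s hs).1 (hgm s hs).2 (hgm t ht).1 (hgm t ht).2 e
    have e3 := congrArg Complex.im e2
    rw [hgim, hgim, e1] at e3
    have := mul_left_cancel₀ hε.ne' e3
    linarith
  · refine ⟨N + s₁, by positivity, ?_⟩
    rw [hγn N _ ⟨by linarith, by linarith⟩]
    simpa [hgs] using hN

theorem odd_pi {z : ℂ} (hi : (Complex.exp z).im = 0) (hr : (Complex.exp z).re < 0) :
    ∃ n : ℤ, (z.im - Real.pi) / (2 * Real.pi) = n := by
  have hpi := Real.pi_pos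
  have : Complex.exp (z - (z.re + Real.pi * I)) = 1 := by
    have e : Complex.exp z = ((Complex.exp z).re : ℂ) := by
      apply Complex.ext <;> simp [hi]
    have hn : ‖Complex.exp z‖ = Real.exp z.re := Complex.norm_exp z
    rw [e, Complex.norm_real, Real.norm_eq_abs, abs_of_neg hr] at hn
    rw [Complex.exp_sub, Complex.exp_add, Complex.exp_pi_mul_I, e, ← Complex.ofReal_exp, ← hn]
    have : ((Complex.exp z).re : ℂ) ≠ 0 := by exact_mod_cast hr.ne
    push_cast
    field_simp
  rw [Complex.exp_eq_one_iff] at this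
  obtain ⟨n, hn⟩ := this
  refine ⟨n, ?_⟩
  have := congrArg Complex.im hn
  simp at this
  rw [this]; field_simp

theorem even_pi {z : ℂ} (hi : (Complex.exp z).im = 0) (hr : 0 < (Complex.exp z).re) :
    ∃ n : ℤ, z.im / (2 * Real.pi) = n := by
  obtain ⟨n, hn⟩ := odd_pi (z := z + Real.pi * I) (by simp [Complex.exp_add, hi])
    (by simpa [Complex.exp_add] using hr)
  exact ⟨n, by rw [← hn]; simp⟩

theorem bot_const (h : PBMap K) (h0 : ∀ z : ℂ, z.im = 0 → (K z).re < z.re)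
    {A : ℂ → ℂ} (hA : Continuous A) (hAe : ∀ z, Complex.exp (A z) = K z - z) :
    (∀ z : ℂ, z.im = 0 → (A z).im = (A 0).im) ∧
      ∃ n : ℤ, ((A 0).im - Real.pi) / (2 * Real.pi) = n := by
  have hodd : ∀ x : ℝ, ∃ n : ℤ, ((A x).im - Real.pi) / (2 * Real.pi) = n := by
    intro x
    apply odd_pi
    · rw [hAe, sub_im, h.bot _ (by simp)]; simp
    · rw [hAe, sub_re]; have := h0 x (by simp); linarith
  have hc := int_const (fun x : ℝ => ((A x).im - Real.pi) / (2 * Real.pi)) (by fun_prop) hodd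
  refine ⟨fun z hz => ?_, by simpa using hodd 0⟩
  have := hc z.re 0
  have hz' : (z.re : ℂ) = z := by apply Complex.ext <;> simp [hz]
  have hpi := Real.pi_pos
  simp only [hz', ofReal_zero] at this
  field_simp at this
  linarith

theorem top_const (h : PBMap K) (h1 : ∀ z : ℂ, z.im = 1 → z.re < (K z).re)
    {A : ℂ → ℂ} (hA : Continuous A) (hAe : ∀ z, Complex.exp (A z) = K z - z) :
    (∀ z : ℂ, z.im = 1 → (A z).im = (A I).im) ∧
      ∃ n : ℤ, ((A I).im) / (2 * Real.pi) = n := by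
  have hodd : ∀ x : ℝ, ∃ n : ℤ, ((A (x + I)).im) / (2 * Real.pi) = n := by
    intro x
    apply even_pi
    · rw [hAe, sub_im, h.top _ (by simp)]; simp
    · rw [hAe, sub_re]; have := h1 (x + I) (by simp); linarith
  have hc := int_const (fun x : ℝ => ((A (x + I)).im) / (2 * Real.pi)) (by fun_prop) hodd
  refine ⟨fun z hz => ?_, by simpa using hodd 0⟩
  have := hc z.re 0
  have hz' : (z.re : ℂ) + I = z := by apply Complex.ext <;> simp [hz]
  have hpi := Real.pi_pos
  simp only [hz', ofReal_zero, zero_add] at this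
  field_simp at this
  linarith

/-- First time a curve reaches height one. -/
theorem first_hit (f : ℝ → ℝ) (T : ℝ) (hT : 0 ≤ T) (hf : ContinuousOn f (Icc 0 T))
    (h0 : f 0 < 1) (h1 : 1 < f T) :
    ∃ τ, 0 ≤ τ ∧ τ ≤ T ∧ f τ = 1 ∧ ∀ s, 0 ≤ s → s ≤ τ → f s ≤ 1 := by
  have hcl : IsClosed (Icc 0 T ∩ f ⁻¹' {1}) := hf.preimage_isClosed_of_isClosed isClosed_Icc
    isClosed_singleton
  have hcomp : IsCompact (Icc 0 T ∩ f ⁻¹' {1}) := isCompact_Icc.of_isClosed_subset hcl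
    inter_subset_left
  have hne : (Icc 0 T ∩ f ⁻¹' {1}).Nonempty := by
    obtain ⟨x, hx, e⟩ := intermediate_value_Icc hT hf ⟨h0.le, h1.le⟩
    exact ⟨x, hx, e⟩
  obtain ⟨τ, hτ, hmin⟩ := hcomp.exists_isLeast hne
  refine ⟨τ, hτ.1.1, hτ.1.2, hτ.2, fun s hs hsτ => ?_⟩
  by_contra! hgt
  have hsT : s ≤ T := hsτ.trans hτ.1.2
  obtain ⟨x, hx, e⟩ := intermediate_value_Icc hs (hf.mono (Icc_subset_Icc_right hsT))
    ⟨h0.le, hgt.le⟩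
  have h2 : τ ≤ x := hmin ⟨⟨hx.1, hx.2.trans hsT⟩, e⟩
  have h3 : x = s := le_antisymm hx.2 (hsτ.trans h2)
  rw [h3] at e
  linarith

theorem index_eq (h : PBMap K) (h0 : ∀ z : ℂ, z.im = 0 → (K z).re < z.re)
    (h1 : ∀ z : ℂ, z.im = 1 → z.re < (K z).re) (hfix : ∀ z, K z ≠ z)
    {A : ℂ → ℂ} (hA : Continuous A) (hAe : ∀ z, Complex.exp (A z) = K z - z) :
    (A 0).im - (A I).im = Real.pi := by
  have hpi := Real.pi_pos
  obtain ⟨δ, hδ, hlow⟩ := h.exists_lower hfix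
  set ε : ℝ := δ / 2 with hεd
  have hε : 0 < ε := by positivity
  obtain ⟨γ, hγc, hγs, hγim, hγ0, hγinj, T, hT0, hT1⟩ := h.exists_curve hε
  have hγc' : ∀ b, ContinuousOn γ (Icc 0 b) := by
    intro b
    obtain ⟨n, hn⟩ := exists_nat_gt b
    exact (hγc n).mono (Icc_subset_Icc_right hn.le)
  obtain ⟨τ, hτ0, -, hτ1, hτ⟩ := first_hit (fun t => (γ t).im) T hT0
    (Complex.continuous_im.comp_continuousOn (hγc' T)) (by rw [hγ0]; norm_num) hT1

  have hγτ : (γ (τ + 1)).im = 1 + ε := by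
    rw [hγs τ hτ0, push_im, h.top _ hτ1.ge, hτ1]
  -- the clamped curve
  set c : ℝ → ℂ := fun t => γ (max 0 (min t (τ + 1))) with hc
  have hcc : Continuous c := by
    refine (hγc' (τ + 1)).comp_continuous (by fun_prop) (fun t => ⟨le_max_left _ _, ?_⟩)
    exact max_le (by linarith) (min_le_right _ _)
  have hcγ : ∀ t, 0 ≤ t → t ≤ τ + 1 → c t = γ t := by
    intro t ht ht'
    simp only [hc]; rw [min_eq_left ht', max_eq_right ht]
  set S : ℂ → ℝ := fun p => max 0 (min p.re τ) with hS
  set U : ℂ → ℝ := fun p => max (S p + 1) (min p.im (τ + 1)) with hU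
  have hSm : ∀ p, 0 ≤ S p ∧ S p ≤ τ := fun p => ⟨le_max_left _ _, max_le hτ0 (min_le_right _ _)⟩
  have hUm : ∀ p, S p + 1 ≤ U p ∧ U p ≤ τ + 1 := fun p =>
    ⟨le_max_left _ _, max_le (by linarith [hSm p]) (min_le_right _ _)⟩
  have hSc : Continuous S := by
    exact continuous_const.max (Complex.continuous_re.min continuous_const)
  have hUc : Continuous U :=
    (hSc.add continuous_const).max (Complex.continuous_im.min continuous_const)
  obtain ⟨L, hLc, hL⟩ := exists_cont_log (fun p => c (U p) - c (S p)) (by fun_prop) (by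
    intro p
    have := hSm p
    have := hUm p
    rw [hcγ _ (by linarith) (by linarith), hcγ _ (by linarith) (by linarith), sub_ne_zero]
    exact (hγinj _ _ (by linarith) (by linarith)).symm)
  -- along the two legs
  set q : ℝ → ℂ := fun u => ((max 0 (u - (τ + 1)) : ℝ) : ℂ) + ((min u (τ + 1) : ℝ) : ℂ) * I with hq
  have hqc : Continuous q := by fun_prop
  have hqre : ∀ u, (q u).re = max 0 (u - (τ + 1)) := by intro u; simp [hq]
  have hqim : ∀ u, (q u).im = min u (τ + 1) := by intro u; simp [hq]
  have hlegs := sin_pos_close (fun u => (L (q u)).im) 1 (2 * τ + 1) (by linarith)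
    (by fun_prop) (by
      intro u hu
      have him : 0 < (Complex.exp (L (q u))).im := by
        rw [hL, sub_im]
        rcases le_or_gt u (τ + 1) with hle | hgt
        · have e1 : S (q u) = 0 := by
            simp only [hS, hqre]
            rw [max_eq_left (by linarith : u - (τ + 1) ≤ 0), min_eq_left hτ0, max_self]
          have e2 : U (q u) = u := by
            simp only [hU, e1, hqim]
            rw [min_eq_left hle, min_eq_left hle, max_eq_right (by linarith [hu.1])]
          rw [e1, e2, hcγ _ (by linarith [hu.1]) hle, hcγ _ le_rfl (by linarith), hγ0]
          have := hγim u hu.1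
          linarith
        · have e2 : U (q u) = τ + 1 := by
            simp only [hU, hqim]
            rw [min_eq_right hgt.le, min_self, max_eq_right (by linarith [hSm (q u)])]
          have := hSm (q u)
          rw [e2, hcγ _ (by linarith) le_rfl, hcγ _ (by linarith) (by linarith), hγτ]
          have := hτ _ this.1 this.2
          linarith
      rw [Complex.exp_im] at him
      exact pos_of_mul_pos_right him (Real.exp_pos _).le)
  -- along the diagonal
  set A' : ℂ → ℂ := fun z => A z + Complex.log (1 + ε * I / (K z - z)) with hA'
  have hKne : ∀ z, K z - z ≠ 0 := fun z => sub_ne_zero.2 (hfix z)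
  have hsmall : ∀ z : ℂ, 0 ≤ z.im → z.im ≤ 1 → 1 + ε * I / (K z - z) ∈ slitPlane := by
    intro z hz hz'
    apply Complex.mem_slitPlane_of_norm_lt_one
    have := hlow z hz hz'
    rw [norm_div, div_lt_one (norm_pos_iff.2 (hKne z))]
    simp only [norm_mul, Complex.norm_I, mul_one, Complex.norm_real, Real.norm_eq_abs,
      abs_of_pos hε]
    linarith
  have hA'e : ∀ z : ℂ, 0 ≤ z.im → z.im ≤ 1 → Complex.exp (A' z) = push K ε z - z := by
    intro z hz hz'
    simp only [hA']
    rw [Complex.exp_add, Complex.exp_log (Complex.slitPlane_ne_zero (hsmall z hz hz')), hAe]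
    have := hKne z
    simp only [push]
    field_simp
    ring
  have hγpos : ∀ s, 0 ≤ s → s ≤ τ → 0 ≤ (γ s).im := by
    intro s hs hs'
    have h2 := hγs s hs
    have h3 : ε ≤ (γ (s + 1)).im := hγim _ (by linarith)
    rw [h2, push_im] at h3
    by_contra! hneg
    rw [h.bot _ hneg.le] at h3
    linarith
  set d : ℝ → ℝ := fun s => max 0 (min s τ) with hd
  have hdm : ∀ s, 0 ≤ d s ∧ d s ≤ τ := fun p => ⟨le_max_left _ _, max_le hτ0 (min_le_right _ _)⟩
  have hdc : Continuous d := by fun_prop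
  set D : ℝ → ℂ := fun s => (d s : ℂ) + ((d s + 1 : ℝ) : ℂ) * I with hD
  have hDc : Continuous D := by fun_prop
  have hDS : ∀ s, S (D s) = d s := by
    intro s
    have : (D s).re = d s := by simp [hD]
    simp only [hS, this]
    rw [min_eq_left (hdm s).2, max_eq_right (hdm s).1]
  have hDU : ∀ s, U (D s) = d s + 1 := by
    intro s
    have : (D s).im = d s + 1 := by simp [hD]
    simp only [hU, this, hDS]
    rw [min_eq_left (by linarith [hdm s]), max_self]
  have hcd : ∀ s, c (d s) = γ (d s) := fun s => hcγ _ (hdm s).1 (by linarith [hdm s])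
  have hdiag := int_const (fun s => ((A' (c (d s))).im - (L (D s)).im) / (2 * Real.pi)) (by
      have hAc : Continuous (fun s => A' (c (d s))) := by
        refine Continuous.add (by fun_prop) ?_
        have := h.cont
        refine Continuous.clog ?_ (fun s => ?_)
        · exact continuous_const.add (continuous_const.div (by fun_prop) (fun s => hKne _))
        · rw [hcd]
          exact hsmall _ (hγpos _ (hdm s).1 (hdm s).2) (hτ _ (hdm s).1 (hdm s).2)
      exact ((Complex.continuous_im.comp hAc).sub
        (Complex.continuous_im.comp (hLc.comp hDc))).div_const _) (by
      intro s
      have e1 := hA'e (γ (d s)) (hγpos _ (hdm s).1 (hdm s).2) (hτ _ (hdm s).1 (hdm s).2)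
      have e2 := hL (D s)
      rw [hDS, hDU, hcd, hcγ _ (by linarith [hdm s]) (by linarith [hdm s]), hγs _ (hdm s).1,
        ← e1] at e2
      rw [Complex.exp_eq_exp_iff_exists_int] at e2
      obtain ⟨n, hn⟩ := e2
      refine ⟨-n, ?_⟩
      rw [hcd]
      have := congrArg Complex.im hn
      simp at this
      rw [this]; push_cast; field_simp; ring)
  have hdiag := hdiag 0 τ
  have d0 : d 0 = 0 := by simp only [hd]; rw [min_eq_left hτ0, max_self]
  have dτ : d τ = τ := by simp only [hd]; rw [min_self, max_eq_right hτ0]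
  have D0 : D 0 = q 1 := by
    apply Complex.ext
    · rw [hqre, max_eq_left (by linarith)]; simp [hD, d0]
    · rw [hqim, min_eq_left (by linarith)]; simp [hD, d0]
  have Dτ : D τ = q (2 * τ + 1) := by
    apply Complex.ext
    · rw [hqre, max_eq_right (by linarith)]; simp [hD, dτ]; ring
    · rw [hqim, min_eq_right (by linarith)]; simp [hD, dτ]
  simp only [d0, dτ, D0, Dτ, hcγ 0 le_rfl (by linarith), hcγ τ hτ0 (by linarith)] at hdiag
  rw [div_left_inj' (by positivity)] at hdiag
  rw [abs_lt] at hlegs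
  -- endpoint estimates
  obtain ⟨hb, m, hm⟩ := h.bot_const h0 hA hAe
  obtain ⟨ht, m', hm'⟩ := h.top_const h1 hA hAe
  have hKim : ∀ z : ℂ, (K z).im = z.im → K z - z = (((K z).re - z.re : ℝ) : ℂ) := by
    intro z hz
    apply Complex.ext
    · simp
    · simp [hz]
  have e1 : (A' (γ 0)).im < (A 0).im ∧ (A 0).im - Real.pi < (A' (γ 0)).im := by
    have hz := h0 _ hγ0
    simp only [hA', add_im, hb _ hγ0, Complex.log_im]
    have h3 : Complex.arg (1 + ε * I / (K (γ 0) - γ 0)) < 0 := by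
      rw [Complex.arg_neg_iff, hKim _ (h.bot _ hγ0.le)]
      rw [add_im, div_ofReal_im]
      simp
      exact div_neg_of_pos_of_neg hε (by linarith)
    have h4 := Complex.neg_pi_lt_arg (1 + ε * I / (K (γ 0) - γ 0))
    constructor <;> linarith
  have e2 : (A I).im < (A' (γ τ)).im ∧ (A' (γ τ)).im ≤ (A I).im + Real.pi := by
    have hz := h1 _ hτ1
    simp only [hA', add_im, ht _ hτ1, Complex.log_im]
    have h3 : 0 < Complex.arg (1 + ε * I / (K (γ τ) - γ τ)) := by
      have h5 : 0 < (1 + ε * I / (K (γ τ) - γ τ)).im := by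
        rw [hKim _ (h.top _ hτ1.ge)]
        rw [add_im, div_ofReal_im]
        simp
        exact div_pos hε (by linarith)
      refine lt_of_le_of_ne (Complex.arg_nonneg_iff.2 h5.le) (fun e => ?_)
      have := (Complex.arg_eq_zero_iff.1 e.symm).2
      linarith
    have h4 := Complex.arg_le_pi (1 + ε * I / (K (γ τ) - γ τ))
    constructor <;> linarith
  rw [div_eq_iff (by positivity)] at hm hm'
  have hj1 : -(1:ℝ) < ((m - m' : ℤ) : ℝ) := by
    push_cast
    nlinarith [hlegs.1, hlegs.2]
  have hj2 : ((m - m' : ℤ) : ℝ) < 1 := by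
    push_cast
    nlinarith [hlegs.1, hlegs.2]
  have hj : m - m' = 0 := by
    have h1 : -1 < m - m' := by exact_mod_cast hj1
    have h2 : m - m' < 1 := by exact_mod_cast hj2
    omega
  have : m = m' := by omega
  rw [this] at hm
  linarith

theorem comp {K' : ℂ → ℂ} (h : PBMap K) (h' : PBMap K') : PBMap (K ∘ K') where
  cont := h.cont.comp h'.cont
  inj := h.inj.comp h'.inj
  per z := by simp [h.per, h'.per]
  bot z hz := by
    have := h'.bot z hz
    simp only [Function.comp]
    rw [h.bot _ (by rw [this]; exact hz), this]
  top z hz := by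
    have := h'.top z hz
    simp only [Function.comp]
    rw [h.top _ (by rw [this]; exact hz), this]
  mid z h0 h1 := h.mid _ (h'.mid z h0 h1).1 (h'.mid z h0 h1).2
  meas X hX hs := by
    rw [image_comp, h.meas, h'.meas X hX hs]
    · exact hX.image_of_continuousOn_injOn h'.cont.continuousOn h'.inj.injOn
    · rintro _ ⟨z, hz, rfl⟩
      exact h'.mid z (hs z hz).1 (hs z hz).2

theorem id' : PBMap id where
  cont := continuous_id
  inj := Function.injective_id
  per z := rfl
  bot z hz := rfl
  top z hz := rfl
  mid z h0 h1 := ⟨h0, h1⟩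
  meas X hX hs := by simp

theorem iterate (h : PBMap K) (n : ℕ) : PBMap (K^[n]) := by
  induction n with
  | zero => exact id'
  | succ n ih => rw [Function.iterate_succ']; exact h.comp ih

theorem shift (h : PBMap K) (r : ℝ) : PBMap (fun z => K z + r) where
  cont := by have := h.cont; fun_prop
  inj a b hab := h.inj (add_right_cancel hab)
  per z := by rw [h.per]; ring
  bot z hz := by simp [h.bot z hz]
  top z hz := by simp [h.top z hz]
  mid z h0 h1 := by simpa using h.mid z h0 h1
  meas X hX hs := by
    have : (fun z => K z + r) '' X = (fun z => z + (r : ℂ)) '' (K '' X) := by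
      simp only [image_image]
    rw [this, image_add_right, MeasureTheory.measure_preimage_add_right, h.meas X hX hs]

theorem conj_meas (h : PBMap K) {R : ℂ → ℂ} (hR : Continuous R) (hRR : Function.Involutive R)
    (hRm : MeasureTheory.MeasurePreserving R MeasureTheory.volume MeasureTheory.volume)
    (hRs : ∀ z : ℂ, 0 < z.im ∧ z.im < 1 → 0 < (R z).im ∧ (R z).im < 1)
    (X : Set ℂ) (hX : MeasurableSet X) (hs : ∀ z ∈ X, 0 < z.im ∧ z.im < 1) :
    MeasureTheory.volume ((fun z => R (K (R z))) '' X) = MeasureTheory.volume X := by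
  have hvol : ∀ Y : Set ℂ, MeasurableSet Y → MeasurableSet (R '' Y) ∧
      MeasureTheory.volume (R '' Y) = MeasureTheory.volume Y := by
    intro Y hY
    rw [hRR.image_eq_preimage_symm]
    exact ⟨hR.measurable hY, hRm.measure_preimage hY.nullMeasurableSet⟩
  have : (fun z => R (K (R z))) '' X = R '' (K '' (R '' X)) := by
    simp only [image_image]
  have hK : MeasurableSet (K '' (R '' X)) :=
    (hvol X hX).1.image_of_continuousOn_injOn h.cont.continuousOn h.inj.injOn
  rw [this, (hvol _ hK).2, h.meas _ (hvol X hX).1, (hvol X hX).2]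
  rintro _ ⟨z, hz, rfl⟩
  exact hRs z (hs z hz)

theorem rot (h : PBMap K) : PBMap (fun z => I - K (I - z)) where
  cont := by have := h.cont; fun_prop
  inj a b hab := by
    have := h.inj (sub_right_injective hab)
    exact sub_right_injective this
  per z := by
    have := h.per (I - (z + 1))
    rw [show I - (z + 1) + 1 = I - z by ring] at this
    rw [this]; ring
  bot z hz := by
    have := h.top (I - z) (by simp; linarith)
    simp [this]
  top z hz := by
    have := h.bot (I - z) (by simp; linarith)
    simp [this]
  mid z h0 h1 := by
    have := h.mid (I - z) (by simp; linarith) (by simp; linarith)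
    simp
    constructor <;> linarith
  meas X hX hs := h.conj_meas (R := fun z => I - z) (by fun_prop) (fun z => by ring)
    (MeasureTheory.Measure.measurePreserving_sub_left _ I) (fun z hz => by simp; constructor <;> linarith)
    X hX hs

theorem refl (h : PBMap K) :
    PBMap (fun z => -(starRingEnd ℂ) (K (-(starRingEnd ℂ) z))) where
  cont := by have := h.cont; fun_prop
  inj a b hab := by
    have := h.inj ((starRingEnd ℂ).injective (neg_injective hab))
    exact (starRingEnd ℂ).injective (neg_injective this)
  per z := by
    have := h.per (-(starRingEnd ℂ) (z + 1))
    rw [show -(starRingEnd ℂ) (z + 1) + 1 = -(starRingEnd ℂ) z by simp] at this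
    rw [this]; simp
  bot z hz := by
    have := h.bot (-(starRingEnd ℂ) z) (by simpa using hz)
    simp [this]
  top z hz := by
    have := h.top (-(starRingEnd ℂ) z) (by simpa using hz)
    simp [this]
  mid z h0 h1 := by
    have := h.mid (-(starRingEnd ℂ) z) (by simpa using h0) (by simpa using h1)
    simpa using this
  meas X hX hs := h.conj_meas (R := fun z => -(starRingEnd ℂ) z) (by fun_prop)
    (fun z => by simp)
    ((MeasureTheory.Measure.measurePreserving_neg _).comp
      Complex.conjLIE.measurePreserving) (fun z hz => by simpa using hz)
    X hX hs

/-- Poincaré–Birkhoff. -/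
theorem fixed (h : PBMap K) (h0 : ∀ z : ℂ, z.im = 0 → (K z).re < z.re)
    (h1 : ∀ z : ℂ, z.im = 1 → z.re < (K z).re) : ∃ z, K z = z := by
  by_contra! hfix
  have hpi := Real.pi_pos
  obtain ⟨A, hA, hAe⟩ := exists_cont_log (fun z => K z - z) (by have := h.cont; fun_prop)
    (fun z => sub_ne_zero.2 (hfix z))
  have e1 := h.index_eq h0 h1 hfix hA hAe
  have e2 := h.rot.index_eq (A := fun z => A (I - z) + Real.pi * I)
    (fun z hz => by
      have := h1 (I - z) (by simp [hz])
      simp at this ⊢; linarith)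
    (fun z hz => by
      have := h0 (I - z) (by simp [hz])
      simp at this ⊢; linarith)
    (fun z e => hfix (I - z) (by linear_combination -e)) (by fun_prop)
    (fun z => by rw [Complex.exp_add, Complex.exp_pi_mul_I, hAe]; ring)
  simp at e2
  linarith

theorem fixed' (h : PBMap K) (h0 : ∀ z : ℂ, z.im = 0 → z.re < (K z).re)
    (h1 : ∀ z : ℂ, z.im = 1 → (K z).re < z.re) : ∃ z, K z = z := by
  obtain ⟨z, hz⟩ := h.refl.fixed
    (fun z hz => by
      have := h0 (-(starRingEnd ℂ) z) (by simp [hz])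
      simp at this ⊢; linarith)
    (fun z hz => by
      have := h1 (-(starRingEnd ℂ) z) (by simp [hz])
      simp at this ⊢; linarith)
  refine ⟨-(starRingEnd ℂ) z, ?_⟩
  have := congrArg (fun w => -(starRingEnd ℂ) w) hz
  simpa using this

end PBMap

theorem eCirc_cont : Continuous eCirc := by unfold eCirc; fun_prop

theorem eCirc_norm (x : ℝ) : ‖eCirc x‖ = 1 := by
  have := Complex.norm_exp_ofReal_mul_I (2 * Real.pi * x)
  push_cast at this
  exact this

theorem eCirc_eq {x y : ℝ} (h : eCirc x = eCirc y) : ∃ n : ℤ, x = y + n := by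
  unfold eCirc at h
  rw [Complex.exp_eq_exp_iff_exists_int] at h
  obtain ⟨n, hn⟩ := h
  refine ⟨n, ?_⟩
  have := congrArg Complex.im hn
  simp at this
  have hpi := Real.pi_pos
  nlinarith [mul_left_cancel₀ (show (2 * Real.pi) ≠ 0 by positivity)
    (show 2 * Real.pi * x = 2 * Real.pi * (y + n) by linarith)]

theorem eCirc_add_int (x : ℝ) (n : ℤ) : eCirc (x + n) = eCirc x := by
  unfold eCirc
  rw [Complex.exp_eq_exp_iff_exists_int]
  exact ⟨n, by push_cast; ring⟩

theorem exp_div_norm (w : ℂ) :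
    Complex.exp w / (‖Complex.exp w‖ : ℂ) = eCirc (w.im / (2 * Real.pi)) := by
  rw [Complex.norm_exp, Complex.ofReal_exp, ← Complex.exp_sub]
  unfold eCirc
  congr 1
  have hpi : (Real.pi : ℂ) ≠ 0 := by exact_mod_cast Real.pi_pos.ne'
  push_cast
  field_simp
  apply Complex.ext <;> simp

theorem eCirc_surj {w : ℂ} (hw : ‖w‖ = 1) : ∃ y, eCirc y = w := by
  have h0 : w ≠ 0 := by rintro rfl; simp at hw
  refine ⟨_, (exp_div_norm (Complex.log w)).symm.trans ?_⟩
  rw [Complex.exp_log h0, hw]; simp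

theorem eCirc_hasDerivAt (x : ℝ) : HasDerivAt eCirc (2 * Real.pi * I * eCirc x) x := by
  unfold eCirc
  have h1 : HasDerivAt (fun x : ℝ => (2 * (Real.pi : ℂ) * (x : ℂ)) * I) (2 * Real.pi * I) x := by
    have := ((Complex.ofRealCLM.hasDerivAt (x := x)).const_mul (2 * (Real.pi : ℂ))).mul_const I
    simpa using this
  convert h1.cexp using 1
  ring

theorem det_formula (L : ℂ →L[ℝ] ℂ) :
    L.det = (L 1).re * (L I).im - (L I).re * (L 1).im := by
  rw [ContinuousLinearMap.det, ← LinearMap.det_toMatrix Complex.basisOneI, Matrix.det_fin_two]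
  simp [LinearMap.toMatrix_apply]

/-- Area coordinates. -/
noncomputable def polar0 (z : ℂ) : ℂ := (Real.sqrt z.im : ℂ) * eCirc z.re

theorem polar0_deriv {z : ℂ} (hz : 0 < z.im) :
    ∃ D : ℂ →L[ℝ] ℂ, HasFDerivAt polar0 D z ∧ D.det = -Real.pi := by
  have h1 : HasFDerivAt (fun z : ℂ => Real.sqrt z.im) _ z :=
    (Complex.imCLM.hasFDerivAt (x := z)).sqrt (by simpa using hz.ne')
  have h2 := (Complex.ofRealCLM.hasFDerivAt (x := Real.sqrt z.im)).comp z h1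
  have h3 := (eCirc_hasDerivAt z.re).hasFDerivAt.comp z (Complex.reCLM.hasFDerivAt (x := z))
  have h4 := h2.mul h3
  refine ⟨_, h4, ?_⟩
  have hs := Real.sqrt_pos.2 hz
  have hn : (eCirc z.re).re * (eCirc z.re).re + (eCirc z.re).im * (eCirc z.re).im = 1 := by
    rw [← Complex.normSq_apply, Complex.normSq_eq_norm_sq, eCirc_norm]; norm_num
  rw [det_formula]
  simp
  field_simp
  linear_combination (-1) * hn

theorem log_diff {L W : ℂ → ℂ} {z : ℂ} (hL : Continuous L) (hLW : ∀ z, Complex.exp (L z) = W z)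
    (hW : DifferentiableAt ℝ W z) : DifferentiableAt ℝ L z := by
  have hW0 : W z ≠ 0 := by rw [← hLW]; exact Complex.exp_ne_zero _
  have hg : DifferentiableAt ℝ (fun w => L z + Complex.log (W w / W z)) z := by
    refine DifferentiableAt.const_add _ ?_
    have h1 : DifferentiableAt ℝ (fun w => W w / W z) z := by
      simp only [div_eq_mul_inv]; exact hW.mul_const _
    have h2 : DifferentiableAt ℂ Complex.log (W z / W z) :=
      Complex.differentiableAt_log (by rw [div_self hW0]; simp)
    exact (h2.restrictScalars ℝ).comp z h1
  refine hg.congr_of_eventuallyEq ?_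
  have hc : Tendsto (fun w => (L w - L z).im) (nhds z) (nhds 0) := by
    have : Continuous (fun w => (L w - L z).im) := by fun_prop
    simpa using this.tendsto z
  filter_upwards [hc.eventually (Ioo_mem_nhds (neg_lt_zero.2 Real.pi_pos) Real.pi_pos)] with w hw
  rw [← hLW w, ← hLW z, ← Complex.exp_sub, Complex.log_exp hw.1 hw.2.le]
  ring

/-- Clamped height. -/
noncomputable def clampY (y : ℝ) : ℝ := max 0 (min y 1)

/-- Radius. -/
noncomputable def radY (z : ℂ) : ℝ := Real.sqrt (clampY z.im)

/-- Area coordinates, clamped. -/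
noncomputable def pol (z : ℂ) : ℂ := (radY z : ℂ) * eCirc z.re

theorem clampY_bot {y : ℝ} (h : y ≤ 0) : clampY y = 0 := by
  unfold clampY; rw [min_eq_left (by linarith), max_eq_left h]

theorem clampY_top {y : ℝ} (h : 1 ≤ y) : clampY y = 1 := by
  unfold clampY; rw [min_eq_right h, max_eq_right (by norm_num)]

theorem clampY_mid {y : ℝ} (h : 0 ≤ y) (h' : y ≤ 1) : clampY y = y := by
  unfold clampY; rw [min_eq_left h', max_eq_right h]

theorem clampY_nonneg (y : ℝ) : 0 ≤ clampY y := le_max_left _ _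

theorem clampY_le (y : ℝ) : clampY y ≤ 1 := max_le zero_le_one (min_le_right _ _)

theorem clampY_pos {y : ℝ} (h : 0 < y) : 0 < clampY y :=
  lt_max_of_lt_right (lt_min h one_pos)

theorem radY_nonneg (z : ℂ) : 0 ≤ radY z := Real.sqrt_nonneg _

theorem radY_le (z : ℂ) : radY z ≤ 1 := by
  exact Real.sqrt_le_iff.2 ⟨zero_le_one, by simpa using clampY_le _⟩

theorem radY_bot {z : ℂ} (h : z.im ≤ 0) : radY z = 0 := by simp [radY, clampY_bot h]

theorem radY_top {z : ℂ} (h : 1 ≤ z.im) : radY z = 1 := by simp [radY, clampY_top h]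

theorem radY_pos {z : ℂ} (h : 0 < z.im) : 0 < radY z := Real.sqrt_pos.2 (clampY_pos h)

theorem radY_cont : Continuous radY := by unfold radY clampY; fun_prop

theorem pol_cont : Continuous pol := by
  unfold pol
  have := radY_cont
  have := eCirc_cont
  fun_prop

theorem pol_norm (z : ℂ) : ‖pol z‖ = radY z := by
  simp [pol, eCirc_norm, abs_of_nonneg (radY_nonneg z)]

theorem pol_mem (z : ℂ) : pol z ∈ Disk := by
  simp [Disk, pol_norm, radY_le]

theorem pol_bot {z : ℂ} (h : z.im ≤ 0) : pol z = 0 := by simp [pol, radY_bot h]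

theorem pol_top {z : ℂ} (h : 1 ≤ z.im) : pol z = eCirc z.re := by simp [pol, radY_top h]

theorem pol_mid {z : ℂ} (h : 0 ≤ z.im) (h' : z.im ≤ 1) : pol z = polar0 z := by
  simp [pol, polar0, radY, clampY_mid h h']

theorem pol_add_int (z : ℂ) (n : ℤ) : pol (z + n) = pol z := by
  simp [pol, radY, eCirc_add_int]

theorem pol_inj {z w : ℂ} (hz : 0 < z.im) (h : pol z = pol w) :
    clampY z.im = clampY w.im ∧ ∃ n : ℤ, z.re = w.re + n := by
  have h1 : radY z = radY w := by rw [← pol_norm, ← pol_norm, h]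
  have h2 : (radY z : ℂ) ≠ 0 := by exact_mod_cast (radY_pos hz).ne'
  constructor
  · unfold radY at h1
    rwa [Real.sqrt_inj (clampY_nonneg _) (clampY_nonneg _)] at h1
  · apply eCirc_eq
    unfold pol at h
    rw [← h1] at h
    exact mul_left_cancel₀ h2 h

namespace SmoothDiskDiffeo
variable (φ : SmoothDiskDiffeo)

/-- Linearization at the origin. -/
noncomputable def lin : ℂ →L[ℝ] ℂ := fderivWithin ℝ φ.toFun Disk 0

/-- The blown-up map. -/
noncomputable def blow (z : ℂ) : ℂ :=
  φ.lin (eCirc z.re) + (φ.toFun (pol z) - φ.lin (pol z)) / (radY z : ℂ)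

theorem inj {z w : ℂ} (hz : z ∈ Disk) (hw : w ∈ Disk) (h : φ.toFun z = φ.toFun w) : z = w := by
  rw [← φ.left_inv z hz, h, φ.left_inv w hw]

theorem zero_mem : (0 : ℂ) ∈ Disk := by simp [Disk]

theorem contOn : ContinuousOn φ.toFun Disk := φ.smooth.continuousOn

theorem hasFDeriv0 : HasFDerivWithinAt φ.toFun φ.lin Disk 0 :=
  ((φ.smooth.differentiableOn (by simp)) 0 zero_mem).hasFDerivWithinAt

theorem comp_pol_cont : Continuous (fun z => φ.toFun (pol z)) :=
  φ.contOn.comp_continuous pol_cont pol_mem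

theorem lin_pol {z : ℂ} : φ.lin (pol z) = radY z * φ.lin (eCirc z.re) := by
  have : pol z = radY z • eCirc z.re := by simp [pol]
  rw [this, map_smul]; simp

theorem blow_pos {z : ℂ} (hz : 0 < z.im) : φ.blow z = φ.toFun (pol z) / (radY z : ℂ) := by
  have h2 : (radY z : ℂ) ≠ 0 := by exact_mod_cast (radY_pos hz).ne'
  rw [blow, lin_pol]
  field_simp
  ring

theorem blow_bot {z : ℂ} (hz : z.im ≤ 0) : φ.blow z = φ.lin (eCirc z.re) := by
  rw [blow, radY_bot hz]; simp

theorem blow_cont (hfix : φ.toFun 0 = 0) : Continuous φ.blow := by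
  have h1 : Continuous (fun z : ℂ => φ.lin (eCirc z.re)) := by
    have := eCirc_cont
    fun_prop
  unfold blow
  refine h1.add ?_
  have hnum : Continuous (fun z => φ.toFun (pol z) - φ.lin (pol z)) :=
    φ.comp_pol_cont.sub (φ.lin.continuous.comp pol_cont)
  rw [continuous_iff_continuousAt]
  intro z₀
  by_cases h0 : radY z₀ = 0
  · rw [ContinuousAt, h0]
    simp only [ofReal_zero, div_zero]
    rw [Metric.tendsto_nhds]
    intro c hc
    have hlo := φ.hasFDeriv0.isLittleO.def (half_pos hc)
    have hp : Tendsto pol (nhds z₀) (nhdsWithin 0 Disk) := by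
      refine tendsto_nhdsWithin_iff.2 ⟨?_, Eventually.of_forall pol_mem⟩
      have := pol_cont.tendsto z₀
      rwa [show pol z₀ = 0 by simp [pol, h0]] at this
    filter_upwards [hp.eventually hlo] with z hz
    simp only [hfix, sub_zero] at hz
    rw [dist_zero_right, norm_div, Complex.norm_real, Real.norm_eq_abs,
      abs_of_nonneg (radY_nonneg z)]
    rw [pol_norm] at hz
    refine lt_of_le_of_lt (div_le_of_le_mul₀ (radY_nonneg z) (half_pos hc).le hz) (half_lt_self hc)
  · refine hnum.continuousAt.div ?_ (by exact_mod_cast h0)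
    exact (Complex.continuous_ofReal.comp radY_cont).continuousAt

theorem lin_inj (hdet : φ.lin.det = 1) : Function.Injective φ.lin := by
  have := (φ.lin.toContinuousLinearEquivOfDetNeZero (by rw [hdet]; norm_num)).injective
  exact this

theorem eCirc_ne (x : ℝ) : eCirc x ≠ 0 := by
  intro h; have := eCirc_norm x; rw [h] at this; simp at this

theorem map_pol_ne (hfix : φ.toFun 0 = 0) {z : ℂ} (hz : 0 < z.im) : φ.toFun (pol z) ≠ 0 := by
  intro h
  have h1 := φ.inj (pol_mem z) zero_mem (h.trans hfix.symm)
  have := pol_norm z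
  rw [h1, norm_zero] at this
  linarith [radY_pos hz]

theorem blow_ne (hfix : φ.toFun 0 = 0) (hdet : φ.lin.det = 1) (z : ℂ) : φ.blow z ≠ 0 := by
  rcases le_or_gt z.im 0 with h | h
  · rw [φ.blow_bot h]
    intro e
    exact eCirc_ne _ (φ.lin_inj hdet (e.trans (map_zero _).symm))
  · rw [φ.blow_pos h]
    exact div_ne_zero (φ.map_pol_ne hfix h) (by exact_mod_cast (radY_pos h).ne')

theorem blow_div {z : ℂ} (hz : 0 < z.im) :
    φ.blow z / (‖φ.blow z‖ : ℂ) = φ.toFun (pol z) / (‖φ.toFun (pol z)‖ : ℂ) := by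
  have h2 : (radY z : ℂ) ≠ 0 := by exact_mod_cast (radY_pos hz).ne'
  rw [φ.blow_pos hz, norm_div, Complex.norm_real, Real.norm_eq_abs, abs_of_nonneg (radY_nonneg z)]
  push_cast
  field_simp

theorem blow_add_int (z : ℂ) (n : ℤ) : φ.blow (z + n) = φ.blow z := by
  unfold blow
  rw [pol_add_int]
  simp [radY, eCirc_add_int]

theorem interior_lt {G : ℝ → ℝ} (hG_cont : Continuous G) (hG_mono : Monotone G)
    (hG_deg : ∀ x : ℝ, G (x + 1) = G x + 1)
    (hG_lift : ∀ x : ℝ, φ.toFun (eCirc x) = eCirc (G x)) {z : ℂ} (hz : z ∈ Disk)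
    (hz1 : ‖z‖ < 1) : ‖φ.toFun z‖ < 1 := by
  have hle : ‖φ.toFun z‖ ≤ 1 := by simpa [Disk] using φ.mapsTo hz
  refine lt_of_le_of_ne hle (fun e => ?_)
  obtain ⟨y, hy⟩ := eCirc_surj e
  let g : CircleDeg1Lift := ⟨⟨G, hG_mono⟩, hG_deg⟩
  obtain ⟨x, hx⟩ := hG_cont.surjective g.tendsto_atTop g.tendsto_atBot y
  have := φ.inj (z := eCirc x) (by simp [Disk, eCirc_norm]) hz (by rw [hG_lift, hx, hy])
  rw [← this, eCirc_norm] at hz1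
  exact lt_irrefl _ hz1

theorem exists_angle (hfix : φ.toFun 0 = 0) (hdet : φ.lin.det = 1) {F : ℝ → ℝ}
    (hF_cont : Continuous F) (hF_deg : ∀ x : ℝ, F (x + 1) = F x + 1)
    (hF_lift : ∀ x : ℝ, φ.lin (eCirc x) / Complex.ofReal ‖φ.lin (eCirc x)‖ = eCirc (F x)) :
    ∃ θ : ℂ → ℝ, Continuous θ ∧
      (∀ z, φ.blow z / (‖φ.blow z‖ : ℂ) = eCirc (θ z)) ∧
      (∀ z : ℂ, z.im ≤ 0 → θ z = F z.re) ∧ (∀ z, θ (z + 1) = θ z + 1) ∧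
      (∀ z, DifferentiableAt ℝ φ.blow z → DifferentiableAt ℝ θ z) := by
  obtain ⟨L, hLc, hL⟩ := exists_cont_log φ.blow (φ.blow_cont hfix) (φ.blow_ne hfix hdet)
  have hLe : ∀ z, φ.blow z / (‖φ.blow z‖ : ℂ) = eCirc ((L z).im / (2 * Real.pi)) := by
    intro z; rw [← hL, exp_div_norm]
  have hInt : ∀ w : ℂ, ∃ n : ℤ,
      (L (w.re + ((min w.im 0 : ℝ) : ℂ) * I)).im / (2 * Real.pi) - F w.re = n := by
    intro w
    have h1 := hLe (w.re + ((min w.im 0 : ℝ) : ℂ) * I)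
    rw [φ.blow_bot (by simp)] at h1
    simp only [add_re, ofReal_re, re_ofReal_mul, I_re, mul_zero, add_zero] at h1
    rw [hF_lift] at h1
    obtain ⟨n, hn⟩ := eCirc_eq h1.symm
    exact ⟨n, by linarith⟩
  have hc := int_const (fun w : ℂ =>
    (L (w.re + ((min w.im 0 : ℝ) : ℂ) * I)).im / (2 * Real.pi) - F w.re) (by fun_prop) hInt
  obtain ⟨k, hk⟩ := hInt 0
  have hθF : ∀ z : ℂ, z.im ≤ 0 → (L z).im / (2 * Real.pi) - k = F z.re := by
    intro z hz
    have := hc z 0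
    have hz' : (z.re : ℂ) + ((min z.im 0 : ℝ) : ℂ) * I = z := by
      rw [min_eq_left hz]; exact re_add_im z
    simp only [hz'] at this
    linarith
  have hθc : Continuous (fun z => (L z).im / (2 * Real.pi) - k) := by fun_prop
  refine ⟨fun z => (L z).im / (2 * Real.pi) - k, hθc, ?_, hθF, ?_, ?_⟩
  · intro z
    rw [hLe, ← eCirc_add_int ((L z).im / (2 * Real.pi) - k) k, sub_add_cancel]
  · have hi : ∀ z, ∃ n : ℤ, ((L (z + 1)).im / (2 * Real.pi) - k) -
        ((L z).im / (2 * Real.pi) - k) = n := by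
      intro z
      have h1 := hLe (z + 1)
      have h2 := φ.blow_add_int z 1
      push_cast at h2
      rw [h2, hLe] at h1
      obtain ⟨n, hn⟩ := eCirc_eq h1.symm
      exact ⟨n, by linarith⟩
    intro z
    have := int_const _ (by fun_prop) hi z 0
    rw [hθF 0 (by simp), hθF (0 + 1) (by simp), add_re, one_re, hF_deg] at this
    linarith
  · intro z hz
    have h1 := log_diff hLc hL hz
    have h2 : DifferentiableAt ℝ (fun z => (L z).im) z :=
      Complex.imCLM.differentiableAt.comp z h1
    simp only [div_eq_mul_inv]
    exact (h2.mul_const _).sub_const _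

end SmoothDiskDiffeo

namespace SmoothDiskDiffeo
variable (φ : SmoothDiskDiffeo)

theorem polar0_norm {z : ℂ} (_h0 : 0 < z.im) (h1 : z.im < 1) : ‖polar0 z‖ < 1 := by
  rw [polar0, norm_mul, eCirc_norm, mul_one, Complex.norm_real, Real.norm_eq_abs,
    abs_of_nonneg (Real.sqrt_nonneg _), Real.sqrt_lt' one_pos]
  simpa using h1

theorem diffAt {z : ℂ} (hz : ‖z‖ < 1) :
    HasFDerivAt φ.toFun (fderivWithin ℝ φ.toFun Disk z) z := by
  have hn : Disk ∈ nhds z := by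
    unfold Disk
    exact mem_of_superset (isOpen_ball.mem_nhds (by simpa using hz)) ball_subset_closedBall
  have : z ∈ Disk := mem_of_mem_nhds hn
  exact ((φ.smooth.differentiableOn (by simp)) z this).hasFDerivWithinAt.hasFDerivAt hn

theorem strip_nhds {z : ℂ} (h0 : 0 < z.im) (h1 : z.im < 1) :
    ∀ᶠ w : ℂ in nhds z, 0 < w.im ∧ w.im < 1 :=
  (Complex.continuous_im.tendsto z).eventually (Ioo_mem_nhds h0 h1)

theorem main_lift (harea : ∀ z ∈ Disk, (fderivWithin ℝ φ.toFun Disk z).det = 1)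
    (hfix : φ.toFun 0 = 0) {F G : ℝ → ℝ}
    (hF_cont : Continuous F) (hF_deg : ∀ x : ℝ, F (x + 1) = F x + 1)
    (hF_lift : ∀ x : ℝ, φ.lin (eCirc x) / Complex.ofReal ‖φ.lin (eCirc x)‖ = eCirc (F x))
    (hG_cont : Continuous G) (hG_mono : Monotone G)
    (hG_deg : ∀ x : ℝ, G (x + 1) = G x + 1)
    (hG_lift : ∀ x : ℝ, φ.toFun (eCirc x) = eCirc (G x)) :
    ∃ (h : ℂ → ℂ) (m : ℤ), PBMap h ∧ (∀ z : ℂ, z.im ≤ 0 → (h z).re = F z.re) ∧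
      (∀ z : ℂ, 1 ≤ z.im → (h z).re = G z.re + m) ∧
      (∀ z : ℂ, 0 < z.im → z.im ≤ 1 → pol (h z) = φ.toFun (pol z)) := by
  have hdet : φ.lin.det = 1 := harea 0 zero_mem
  obtain ⟨θ, hθc, hθ, hθF, hθper, hθd⟩ := φ.exists_angle hfix hdet hF_cont hF_deg hF_lift
  set Y : ℂ → ℝ := fun z => ‖φ.toFun (pol z)‖ ^ 2 + (z.im - clampY z.im) with hY
  have hYc : Continuous Y := by
    have := φ.comp_pol_cont
    have : Continuous clampY := by unfold clampY; fun_prop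
    fun_prop
  have hYbot : ∀ z : ℂ, z.im ≤ 0 → Y z = z.im := by
    intro z hz
    simp [hY, pol_bot hz, hfix, clampY_bot hz]
  have hntop : ∀ z : ℂ, 1 ≤ z.im → ‖φ.toFun (pol z)‖ = 1 := by
    intro z hz
    rw [pol_top hz, hG_lift, eCirc_norm]
  have hYtop : ∀ z : ℂ, 1 ≤ z.im → Y z = z.im := by
    intro z hz
    simp [hY, hntop z hz, clampY_top hz]
  have hYmid' : ∀ z : ℂ, 0 ≤ z.im → z.im ≤ 1 → Y z = ‖φ.toFun (pol z)‖ ^ 2 := by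
    intro z h0 h1
    simp [hY, clampY_mid h0 h1]
  have hYmid : ∀ z : ℂ, 0 < z.im → z.im < 1 → 0 < Y z ∧ Y z < 1 := by
    intro z h0 h1
    rw [hYmid' z h0.le h1.le]
    have h2 := norm_pos_iff.2 (φ.map_pol_ne hfix h0)
    have h3 : ‖φ.toFun (pol z)‖ < 1 := φ.interior_lt hG_cont hG_mono hG_deg hG_lift (pol_mem z)
      (by rw [pol_mid h0.le h1.le]; exact polar0_norm h0 h1)
    exact ⟨by positivity, by nlinarith⟩
  set h : ℂ → ℂ := fun z => (θ z : ℂ) + (Y z : ℂ) * I with hh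
  have hre : ∀ z, (h z).re = θ z := by intro z; simp [hh]
  have him : ∀ z, (h z).im = Y z := by intro z; simp [hh]
  have hθint : ∀ (z : ℂ) (n : ℤ), θ (z + n) = θ z + n := by
    intro z n
    induction n using Int.induction_on with
    | zero => simp
    | succ n ih => push_cast at ih ⊢; rw [← add_assoc, hθper, ih, add_assoc]
    | pred n ih =>
      have := hθper (z + ((-(n:ℤ) - 1 : ℤ) : ℂ))
      push_cast at this ih ⊢
      rw [show z + (-(n:ℂ) - 1) + 1 = z + -n by ring, ih] at this
      linarith
  -- semiconjugacy
  have hsemi : ∀ z : ℂ, 0 < z.im → z.im ≤ 1 → pol (h z) = φ.toFun (pol z) := by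
    intro z h0 h1
    have hle : ‖φ.toFun (pol z)‖ ≤ 1 := by simpa [Disk] using φ.mapsTo (pol_mem z)
    have hne := φ.map_pol_ne hfix h0
    have hr : radY (h z) = ‖φ.toFun (pol z)‖ := by
      rw [radY, him, hYmid' z h0.le h1, clampY_mid (by positivity), Real.sqrt_sq (norm_nonneg _)]
      exact pow_le_one₀ (norm_nonneg _) hle
    rw [pol, hr, hre, ← hθ, φ.blow_div h0]
    have : (‖φ.toFun (pol z)‖ : ℂ) ≠ 0 := by exact_mod_cast (norm_ne_zero_iff.2 hne)
    field_simp
  have hinj : Function.Injective h := by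
    intro z w e
    have e1 : θ z = θ w := by rw [← hre, e, hre]
    have e2 : Y z = Y w := by rw [← him, e, him]
    -- it suffices that they differ by an integer
    have hsuff : z.im = w.im → (∃ n : ℤ, z.re = w.re + n) → z = w := by
      rintro hi ⟨n, hn⟩
      have hzw : z = w + n := by apply Complex.ext <;> simp [hi, hn]
      rw [hzw, hθint] at e1
      have : (n : ℝ) = 0 := by linarith
      have : n = 0 := by exact_mod_cast this
      rw [hzw, this]; simp
    have hdir : φ.blow z / (‖φ.blow z‖ : ℂ) = φ.blow w / (‖φ.blow w‖ : ℂ) := by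
      rw [hθ, hθ, e1]
    have hpos : ∀ v : ℂ, 0 < v.im ↔ 0 < Y v := by
      intro v
      rcases le_or_gt v.im 0 with h0 | h0
      · rw [hYbot v h0]
      rcases le_or_gt 1 v.im with h1 | h1
      · rw [hYtop v h1]
      · exact iff_of_true h0 (hYmid v h0 h1).1
    have hone : ∀ v : ℂ, 1 ≤ v.im ↔ 1 ≤ Y v := by
      intro v
      rcases le_or_gt v.im 0 with h0 | h0
      · rw [hYbot v h0]
      rcases le_or_gt 1 v.im with h1 | h1
      · rw [hYtop v h1]
      · exact iff_of_false (not_le.2 h1) (not_le.2 (hYmid v h0 h1).2)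
    rcases le_or_gt z.im 0 with h0 | h0
    · have h0' : w.im ≤ 0 := by
        rw [← not_lt, hpos, ← e2, ← hpos, not_lt]; exact h0
      have hi : z.im = w.im := by rw [← hYbot z h0, e2, hYbot w h0']
      refine hsuff hi (eCirc_eq ?_)
      rw [φ.blow_bot h0, φ.blow_bot h0'] at hdir
      set a := φ.lin (eCirc z.re) with ha
      set b := φ.lin (eCirc w.re) with hb
      have ha0 : a ≠ 0 := by rw [ha, ← φ.blow_bot h0]; exact φ.blow_ne hfix hdet z
      have hb0 : b ≠ 0 := by rw [hb, ← φ.blow_bot h0']; exact φ.blow_ne hfix hdet w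
      have hna := norm_pos_iff.2 ha0
      have hnb := norm_pos_iff.2 hb0
      have hac : (‖a‖ : ℂ) ≠ 0 := by exact_mod_cast hna.ne'
      have hbc : (‖b‖ : ℂ) ≠ 0 := by exact_mod_cast hnb.ne'
      have hlin : φ.lin (‖b‖ • eCirc z.re) = φ.lin (‖a‖ • eCirc w.re) := by
        rw [map_smul, map_smul, ← ha, ← hb]
        simp only [Complex.real_smul]
        field_simp at hdir
        linear_combination hdir
      have hv := φ.lin_inj hdet hlin
      have hn : ‖b‖ = ‖a‖ := by
        have := congrArg norm hv
        simpa [norm_smul, eCirc_norm] using this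
      rw [hn] at hv
      exact smul_right_injective ℂ hna.ne' hv
    · have h0' : 0 < w.im := by rw [hpos, ← e2, ← hpos]; exact h0
      rw [φ.blow_div h0, φ.blow_div h0'] at hdir
      have hnn : ‖φ.toFun (pol z)‖ = ‖φ.toFun (pol w)‖ ∧
          (clampY z.im = clampY w.im → z.im = w.im) := by
        rcases le_or_gt 1 z.im with h1 | h1
        · have h1' : 1 ≤ w.im := by rw [hone, ← e2, ← hone]; exact h1
          rw [hntop z h1, hntop w h1']
          exact ⟨rfl, fun _ => by rw [← hYtop z h1, e2, hYtop w h1']⟩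
        · have h1' : w.im < 1 := by rw [← not_le, hone, ← e2, ← hone, not_le]; exact h1
          rw [clampY_mid h0.le h1.le, clampY_mid h0'.le h1'.le]
          refine ⟨?_, fun e => e⟩
          rw [hYmid' z h0.le h1.le, hYmid' w h0'.le h1'.le] at e2
          exact (pow_left_inj₀ (norm_nonneg _) (norm_nonneg _) two_ne_zero).1 e2
      have hne := norm_ne_zero_iff.2 (φ.map_pol_ne hfix h0')
      rw [hnn.1] at hdir
      have e3 : φ.toFun (pol z) = φ.toFun (pol w) := by
        have hc : (‖φ.toFun (pol w)‖ : ℂ) ≠ 0 := by exact_mod_cast hne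
        exact (div_left_inj' hc).1 hdir
      have e4 := pol_inj h0 (φ.inj (pol_mem z) (pol_mem w) e3)
      exact hsuff (hnn.2 e4.1) e4.2
  -- derivative
  have hder : ∀ z : ℂ, 0 < z.im → z.im < 1 → ∃ D : ℂ →L[ℝ] ℂ, HasFDerivAt h D z ∧ D.det = 1 := by
    intro z h0 h1
    obtain ⟨P, hP, hPd⟩ := polar0_deriv h0
    have hz' : 0 < (h z).im ∧ (h z).im < 1 := by rw [him]; exact hYmid z h0 h1
    obtain ⟨Q, hQ, hQd⟩ := polar0_deriv hz'.1
    have hφ := φ.diffAt (polar0_norm h0 h1)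
    have hφP := hφ.comp z hP
    have hnear := strip_nhds h0 h1
    have hblow : DifferentiableAt ℝ φ.blow z := by
      have hs : DifferentiableAt ℝ (fun z : ℂ => ((Real.sqrt z.im : ℝ) : ℂ)) z := by
        have h1 : DifferentiableAt ℝ (fun z : ℂ => Real.sqrt z.im) z :=
          (Complex.imCLM.differentiableAt (x := z)).sqrt (by simpa using h0.ne')
        exact Complex.ofRealCLM.differentiableAt.comp z h1
      have hne : ((Real.sqrt z.im : ℝ) : ℂ) ≠ 0 := by
        exact_mod_cast (Real.sqrt_pos.2 h0).ne'
      have hd := hφP.differentiableAt.mul (hs.inv hne)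
      refine hd.congr_of_eventuallyEq ?_
      filter_upwards [hnear] with w hw
      rw [φ.blow_pos hw.1, pol_mid hw.1.le hw.2.le, radY, clampY_mid hw.1.le hw.2.le]
      rfl
    have hYd : DifferentiableAt ℝ Y z := by
      have := hφP.differentiableAt.norm_sq ℝ
      refine this.congr_of_eventuallyEq ?_
      filter_upwards [hnear] with w hw
      rw [hYmid' w hw.1.le hw.2.le, pol_mid hw.1.le hw.2.le]
      rfl
    have hhd : DifferentiableAt ℝ h z := by
      have h1 : DifferentiableAt ℝ (fun z => (θ z : ℂ)) z :=
        Complex.ofRealCLM.differentiableAt.comp z (hθd z hblow)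
      have h2 : DifferentiableAt ℝ (fun z => (Y z : ℂ)) z :=
        Complex.ofRealCLM.differentiableAt.comp z hYd
      exact h1.add (h2.mul_const I)
    refine ⟨fderiv ℝ h z, hhd.hasFDerivAt, ?_⟩
    have hQh := hQ.comp z hhd.hasFDerivAt
    have heq : polar0 ∘ h =ᶠ[nhds z] φ.toFun ∘ polar0 := by
      filter_upwards [hnear] with w hw
      have hw' : 0 < (h w).im ∧ (h w).im < 1 := by rw [him]; exact hYmid w hw.1 hw.2
      have := hsemi w hw.1 hw.2.le
      rw [pol_mid hw.1.le hw.2.le, pol_mid hw'.1.le hw'.2.le] at this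
      exact this
    have hu := (hQh.congr_of_eventuallyEq heq.symm).unique hφP
    have hd := congrArg ContinuousLinearMap.det hu
    have hmul : ∀ S T : ℂ →L[ℝ] ℂ, (S.comp T).det = S.det * T.det := by
      intro S T
      simp only [ContinuousLinearMap.det, ContinuousLinearMap.toLinearMap_comp]
      exact LinearMap.det_comp _ _
    rw [hmul, hmul, hQd, hPd, harea _ (by simpa [Disk] using (polar0_norm h0 h1).le), one_mul] at hd
    have hpi := Real.pi_pos.ne'
    have : -Real.pi * (fderiv ℝ h z).det = -Real.pi * 1 := by linarith
    exact mul_left_cancel₀ (neg_ne_zero.2 hpi) this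
  -- top boundary
  have htop : ∃ m : ℤ, ∀ z : ℂ, 1 ≤ z.im → θ z = G z.re + m := by
    have hInt : ∀ w : ℂ, ∃ n : ℤ, θ (w.re + ((max w.im 1 : ℝ) : ℂ) * I) - G w.re = n := by
      intro w
      have h1 := hθ (w.re + ((max w.im 1 : ℝ) : ℂ) * I)
      rw [φ.blow_div (by simp), pol_top (by simp)] at h1
      simp only [add_re, ofReal_re, re_ofReal_mul, I_re, mul_zero, add_zero, hG_lift, eCirc_norm,
        ofReal_one, div_one] at h1
      obtain ⟨n, hn⟩ := eCirc_eq h1.symm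
      exact ⟨n, by linarith⟩
    have hc := int_const (fun w : ℂ => θ (w.re + ((max w.im 1 : ℝ) : ℂ) * I) - G w.re)
      (by fun_prop) hInt
    obtain ⟨m, hm⟩ := hInt 0
    refine ⟨m, fun z hz => ?_⟩
    have := hc z 0
    have hz' : (z.re : ℂ) + ((max z.im 1 : ℝ) : ℂ) * I = z := by
      rw [max_eq_left hz]; exact re_add_im z
    simp only [hz'] at this
    linarith
  obtain ⟨m, hm⟩ := htop
  refine ⟨h, m, ⟨by fun_prop, hinj, ?_, ?_, ?_, ?_, ?_⟩, fun z hz => by rw [hre, hθF z hz],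
    fun z hz => by rw [hre, hm z hz], hsemi⟩
  · intro z
    have hp : pol (z + 1) = pol z := by simpa using pol_add_int z 1
    have : Y (z + 1) = Y z := by simp only [hY, hp]; simp
    simp only [hh]
    rw [this, hθper]; push_cast; ring
  · intro z hz; rw [him, hYbot z hz]
  · intro z hz; rw [him, hYtop z hz]
  · intro z h0 h1; rw [him]; exact hYmid z h0 h1
  · intro X hX hs
    choose! D hD hDd using hder
    rw [← MeasureTheory.lintegral_abs_det_fderiv_eq_addHaar_image MeasureTheory.volume hX
      (fun z hz => (hD z (hs z hz).1 (hs z hz).2).hasFDerivWithinAt) hinj.injOn]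
    rw [MeasureTheory.setLIntegral_congr_fun (g := fun _ => 1) hX
      (fun z hz => by simp [hDd z (hs z hz).1 (hs z hz).2])]
    simp

end SmoothDiskDiffeo

theorem rot_lt {F : ℝ → ℝ} {α : ℝ} (hF_mono : Monotone F)
    (hF_deg : ∀ x : ℝ, F (x + 1) = F x + 1)
    (hα : ∀ x : ℝ, Tendsto (fun n : ℕ => (F^[n] x - x) / n) atTop (nhds α)) (q : ℕ) (p : ℤ) :
    (q * α < p → ∀ x, F^[q] x < x + p) ∧ (p < q * α → ∀ x, x + p < F^[q] x) := by
  let f : CircleDeg1Lift := ⟨⟨F, hF_mono⟩, hF_deg⟩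
  have hτ : f.translationNumber = α := by
    refine tendsto_nhds_unique (f.tendsto_translationNumber 0) ?_
    simp only [CircleDeg1Lift.coe_pow]
    exact hα 0
  constructor
  · intro h x
    have := (f ^ q).map_lt_of_translationNumber_lt_int (n := p)
      (by rw [f.translationNumber_pow, hτ]; exact h) x
    rwa [CircleDeg1Lift.coe_pow] at this
  · intro h x
    have := (f ^ q).lt_map_of_int_lt_translationNumber (n := p)
      (by rw [f.translationNumber_pow, hτ]; exact h) x
    rwa [CircleDeg1Lift.coe_pow] at this

theorem PBMap.iterate_edge {h : ℂ → ℂ} {E : ℝ → ℝ} {P : ℝ → Prop}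
    (hc : ∀ z : ℂ, P z.im → (h z).im = z.im) (hE : ∀ z : ℂ, P z.im → (h z).re = E z.re)
    (n : ℕ) (z : ℂ) (hz : P z.im) : (h^[n] z).im = z.im ∧ (h^[n] z).re = E^[n] z.re := by
  induction n with
  | zero => exact ⟨rfl, rfl⟩
  | succ n ih =>
    rw [Function.iterate_succ_apply', Function.iterate_succ_apply']
    have hP : P (h^[n] z).im := by rw [ih.1]; exact hz
    exact ⟨by rw [hc _ hP, ih.1], by rw [hE _ hP, ih.2]⟩

/-- **The rotation number of the projectivized linearization at the fixed point equals
the rotation number on the boundary.**  Here `T = Dφ(0)`, `f_T(v) = Tv/|Tv|` on the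
circle, and rotation numbers are compared in `ℝ/ℤ` via translation numbers of
(monotone, degree one) lifts `F` of `f_T` and `G` of `φ|_{∂D}`. -/
theorem rotation_number_of_linearization (φ : SmoothDiskDiffeo)
    (harea : ∀ z ∈ Disk, (fderivWithin ℝ φ.toFun Disk z).det = 1)
    (hfix : φ.toFun 0 = 0)
    (hper : ∀ z ∈ Disk, z ≠ 0 → ∀ n : ℕ, 1 ≤ n → φ.toFun^[n] z ≠ z)
    (F G : ℝ → ℝ) (α β : ℝ)
    (hF_cont : Continuous F) (hF_mono : Monotone F)
    (hF_deg : ∀ x : ℝ, F (x + 1) = F x + 1)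
    (hF_lift : ∀ x : ℝ,
      fderivWithin ℝ φ.toFun Disk 0 (eCirc x) /
          Complex.ofReal ‖fderivWithin ℝ φ.toFun Disk 0 (eCirc x)‖ = eCirc (F x))
    (hα : ∀ x : ℝ, Tendsto (fun n : ℕ => (F^[n] x - x) / n) atTop (nhds α))
    (hG_cont : Continuous G) (hG_mono : Monotone G)
    (hG_deg : ∀ x : ℝ, G (x + 1) = G x + 1)
    (hG_lift : ∀ x : ℝ, φ.toFun (eCirc x) = eCirc (G x))
    (hβ : ∀ x : ℝ, Tendsto (fun n : ℕ => (G^[n] x - x) / n) atTop (nhds β)) :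
    (α : AddCircle (1:ℝ)) = (β : AddCircle (1:ℝ)) := by
  obtain ⟨h, m, hPB, hbot, htop, hsemi⟩ := φ.main_lift harea hfix hF_cont hF_deg hF_lift hG_cont
    hG_mono hG_deg hG_lift
  set G' : ℝ → ℝ := fun x => G x + m with hG'
  have hG'_mono : Monotone G' := fun x y hxy => by simp only [hG']; linarith [hG_mono hxy]
  have hG'_deg : ∀ x, G' (x + 1) = G' x + 1 := fun x => by simp only [hG']; rw [hG_deg]; ring
  have hGint : ∀ (x : ℝ) (k : ℤ), G (x + k) = G x + k :=
    fun x k => CircleDeg1Lift.map_add_int (⟨⟨G, hG_mono⟩, hG_deg⟩ : CircleDeg1Lift) x k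
  have hiter : ∀ (n : ℕ) (x : ℝ), G'^[n] x = G^[n] x + n * m := by
    intro n x
    induction n with
    | zero => simp
    | succ n ih =>
      rw [Function.iterate_succ_apply', Function.iterate_succ_apply', ih]
      have := hGint (G^[n] x) (n * m)
      push_cast at this ⊢
      simp only [hG']
      rw [this]; ring
  have hβ' : ∀ x : ℝ, Tendsto (fun n : ℕ => (G'^[n] x - x) / n) atTop (nhds (β + m)) := by
    intro x
    refine ((hβ x).add_const (m : ℝ)).congr' ?_
    filter_upwards [eventually_ge_atTop 1] with n hn
    have : (n : ℝ) ≠ 0 := by positivity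
    rw [hiter]
    field_simp
    ring
  have key : α = β + m := by
    -- no periodic points
    have hnofix : ∀ (q : ℕ) (p : ℤ), 1 ≤ q →
        (∀ z : ℂ, z.im ≤ 0 ∨ 1 < z.im ∨ h^[q] z + ((-p : ℝ) : ℂ) ≠ z) := by
      intro q p hq z
      by_contra! hcon
      obtain ⟨h0, h1, e⟩ := hcon
      have hit : ∀ n : ℕ, 0 < (h^[n] z).im ∧ (h^[n] z).im ≤ 1 ∧
          pol (h^[n] z) = φ.toFun^[n] (pol z) := by
        intro n
        induction n with
        | zero => exact ⟨h0, h1, rfl⟩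
        | succ n ih =>
          rw [Function.iterate_succ_apply', Function.iterate_succ_apply']
          refine ⟨hPB.im_pos ih.1, ?_, by rw [hsemi _ ih.1 ih.2.1, ih.2.2]⟩
          rcases ih.2.1.eq_or_lt with e1 | e1
          · rw [hPB.top _ e1.ge]; exact ih.2.1
          · exact (hPB.mid _ ih.1 e1).2.le
      refine hper (pol z) (pol_mem z) ?_ q hq ?_
      · intro e0
        have := pol_norm z
        rw [e0, norm_zero] at this
        linarith [radY_pos h0]
      · rw [← (hit q).2.2]
        have : h^[q] z = z + p := by
          push_cast at e; linear_combination e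
        rw [this, pol_add_int]
    have hedge0 := fun (q : ℕ) (z : ℂ) (hz : z.im ≤ 0) => PBMap.iterate_edge (h := h) (E := F)
      (P := fun y => y ≤ 0) (fun z hz => hPB.bot z hz) hbot q z hz
    have hedge1 := fun (q : ℕ) (z : ℂ) (hz : 1 ≤ z.im) => PBMap.iterate_edge (h := h) (E := G')
      (P := fun y => 1 ≤ y) (fun z hz => hPB.top z hz) htop q z hz
    have hfin : ∀ (q : ℕ) (p : ℤ), 1 ≤ q → ∀ z : ℂ,
        h^[q] z + ((-p : ℝ) : ℂ) = z → 0 < z.im → z.im ≤ 1 → False := by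
      intro q p hq z e h0 h1
      rcases hnofix q p hq z with h2 | h2 | h2
      · linarith
      · linarith
      · exact h2 e
    have hclose : ∀ (q : ℕ) (p : ℤ), 1 ≤ q → (∀ x, F^[q] x ≠ x + p) → (∀ x, G'^[q] x ≠ x + p) →
        ∀ z : ℂ, h^[q] z + ((-p : ℝ) : ℂ) = z → False := by
      intro q p hq hFq hGq z e
      have e' : (h^[q] z).re = z.re + p := by
        have := congrArg Complex.re e
        rw [add_re, ofReal_re] at this
        linarith
      rcases le_or_gt z.im 0 with h0 | h0
      · exact hFq z.re (by rw [← (hedge0 q z h0).2, e'])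
      rcases le_or_gt z.im 1 with h1 | h1
      · exact hfin q p hq z e h0 h1
      · exact hGq z.re (by rw [← (hedge1 q z h1.le).2, e'])
    by_contra hne
    rcases lt_or_gt_of_ne hne with hlt | hlt
    · obtain ⟨r, hr1, hr2⟩ := exists_rat_btwn hlt
      have hqpos : (0 : ℝ) < r.den := by exact_mod_cast r.pos
      have hr : (r : ℝ) * r.den = r.num := by exact_mod_cast Rat.mul_den_eq_num r
      have hF1 := (rot_lt hF_mono hF_deg hα r.den r.num).1 (by nlinarith)
      have hG1 := (rot_lt hG'_mono hG'_deg hβ' r.den r.num).2 (by nlinarith)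
      obtain ⟨z, hz⟩ := ((hPB.iterate r.den).shift (-r.num)).fixed
        (fun z hz => by
          rw [add_re, ofReal_re, (hedge0 r.den z hz.le).2]
          linarith [hF1 z.re])
        (fun z hz => by
          rw [add_re, ofReal_re, (hedge1 r.den z hz.ge).2]
          linarith [hG1 z.re])
      exact hclose r.den r.num r.pos (fun x => (hF1 x).ne) (fun x => (hG1 x).ne') z hz
    · obtain ⟨r, hr1, hr2⟩ := exists_rat_btwn hlt
      have hqpos : (0 : ℝ) < r.den := by exact_mod_cast r.pos
      have hr : (r : ℝ) * r.den = r.num := by exact_mod_cast Rat.mul_den_eq_num r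
      have hF1 := (rot_lt hF_mono hF_deg hα r.den r.num).2 (by nlinarith)
      have hG1 := (rot_lt hG'_mono hG'_deg hβ' r.den r.num).1 (by nlinarith)
      obtain ⟨z, hz⟩ := ((hPB.iterate r.den).shift (-r.num)).fixed'
        (fun z hz => by
          rw [add_re, ofReal_re, (hedge0 r.den z hz.le).2]
          linarith [hF1 z.re])
        (fun z hz => by
          rw [add_re, ofReal_re, (hedge1 r.den z hz.ge).2]
          linarith [hG1 z.re])
      exact hclose r.den r.num r.pos (fun x => (hF1 x).ne') (fun x => (hG1 x).ne) z hz
  rw [key]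
  have : ((m : ℝ) : AddCircle (1:ℝ)) = 0 := by
    rw [AddCircle.coe_eq_zero_iff]; exact ⟨m, by simp⟩
  rw [AddCircle.coe_add, this, add_zero]
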